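/- Exponential tightness: for every T > 0 there exists a compact set K_T ⊂ M_1(ℂ) such that limsup_{n→∞} (1/n²) log P(L_n ∉ K_T) ≤ −T. -/

import Mathlib

open MeasureTheory ProbabilityTheory Filter Polynomial
open scoped ENNReal NNReal Classical

noncomputable section

/-- Polynomials of positive degree with all coefficients real and strictly positive. -/
def polPos (p : Polynomial ℂ) : Prop :=
  0 < p.natDegree ∧ ∀ i ≤ p.natDegree, (p.coeff i).im = 0 ∧ 0 < (p.coeff i).re

/-- Empirical measure of the zeros of a polynomial (counted with multiplicity). -/
def zeroMeasure (p : Polynomial ℂ) : Measure ℂ :=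
  (p.natDegree : ℝ≥0∞)⁻¹ • (p.roots.map MeasureTheory.Measure.dirac).sum

/-- The closure of the set of empirical zero measures of polynomials with positive
coefficients, inside the space of probability measures with the weak topology. -/
def calP : Set (ProbabilityMeasure ℂ) :=
  closure {μ : ProbabilityMeasure ℂ |
    ∃ p : Polynomial ℂ, polPos p ∧ (μ : Measure ℂ) = zeroMeasure p}

/-- The kernel f(z,w) = log|1-z| + log|1-w| - log|z-w|. -/
def fker (z w : ℂ) : ℝ :=
  Real.log ‖1 - z‖ + Real.log ‖1 - w‖
    - Real.log ‖z - w‖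

/-- The double integral ∬ f dμ dμ, as an extended real number: the (Lebesgue)
integral of the positive part minus that of the negative part. -/
def doubleInt (μ : Measure ℂ) : EReal :=
  ((∫⁻ q : ℂ × ℂ, ENNReal.ofReal (fker q.1 q.2) ∂(μ.prod μ) : ℝ≥0∞) : EReal)
    - ((∫⁻ q : ℂ × ℂ, ENNReal.ofReal (-(fker q.1 q.2)) ∂(μ.prod μ) : ℝ≥0∞) : EReal)

/-- The large deviations rate function. -/
def rateI (μ : ProbabilityMeasure ℂ) : EReal :=
  if μ ∈ calP then (2 : EReal)⁻¹ * doubleInt (μ : Measure ℂ) else ⊤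

end

noncomputable section

/-- The random polynomial `P_n(z) = ∑_{j=0}^n ξ_j z^j` built from real coefficients. -/
def randPoly {Ω : Type*} (ξ : ℕ → Ω → ℝ) (n : ℕ) (ω : Ω) : Polynomial ℂ :=
  ∑ j ∈ Finset.range (n + 1), Polynomial.C ((ξ j ω : ℝ) : ℂ) * Polynomial.X ^ j

end

lemma coeff_A (R : ℝ) (hR : 1 ≤ R) (s : Multiset ℂ) (hs : ∀ a ∈ s, R < ‖a‖) (i : ℕ) :
    ‖((s.map (fun a => (1 - C a⁻¹ * X : ℂ[X]))).prod).coeff i‖ ≤ (s.card.choose i) * R⁻¹ ^ i := by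
  have hR0 : 0 < R := by linarith
  induction s using Multiset.induction_on generalizing i with
  | empty =>
    rcases i with _ | i <;> simp [Polynomial.coeff_one]
  | cons a s ih =>
    have ih' := ih (fun b hb => hs b (Multiset.mem_cons_of_mem hb))
    have ha : ‖a⁻¹‖ ≤ R⁻¹ := by
      rw [norm_inv]
      exact inv_anti₀ hR0 (hs a (Multiset.mem_cons_self a s)).le
    rw [Multiset.map_cons, Multiset.prod_cons, sub_mul, one_mul, mul_assoc, Polynomial.coeff_sub,
      Polynomial.coeff_C_mul]
    rcases i with _ | i
    · simpa using ih' 0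
    · rw [Polynomial.coeff_X_mul, Multiset.card_cons, Nat.choose_succ_succ]
      refine (norm_sub_le _ _).trans ?_
      rw [norm_mul]
      have h1 := ih' (i+1)
      have h2 := mul_le_mul ha (ih' i) (norm_nonneg _) (by positivity)
      push_cast
      calc _ ≤ _ := add_le_add h1 h2
        _ = _ := by ring

lemma mahler_A (s : Multiset ℂ) (hs : ∀ a ∈ s, 1 < ‖a‖) :
    ((s.map (fun a => (1 - C a⁻¹ * X : ℂ[X]))).prod).mahlerMeasure = 1 := by
  induction s using Multiset.induction_on with
  | empty => simp
  | cons a s ih =>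
    have ha := hs a (Multiset.mem_cons_self a s)
    have ha0 : a ≠ 0 := by
      rintro rfl
      simp at ha
      linarith
    rw [Multiset.map_cons, Multiset.prod_cons, Polynomial.mahlerMeasure_mul,
      ih (fun b hb => hs b (Multiset.mem_cons_of_mem hb))]
    have : (1 - C a⁻¹ * X : ℂ[X]) = C (-a⁻¹) * X + C 1 := by simp; ring
    rw [this, Polynomial.mahlerMeasure_C_mul_X_add_C (by simpa using ha0)]
    simp only [norm_neg, norm_inv, norm_one, mul_one]
    exact max_eq_right (inv_le_one_of_one_le₀ ha.le)

lemma factor_A (s : Multiset ℂ) (hs : ∀ a ∈ s, a ≠ 0) :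
    ∃ c : ℂ, (s.map (fun a => (X - C a : ℂ[X]))).prod = 
      C c * (s.map (fun a => (1 - C a⁻¹ * X : ℂ[X]))).prod := by
  induction s using Multiset.induction_on with
  | empty => exact ⟨1, by simp⟩
  | cons a s ih =>
    obtain ⟨c, hc⟩ := ih (fun b hb => hs b (Multiset.mem_cons_of_mem hb))
    have ha := hs a (Multiset.mem_cons_self a s)
    refine ⟨-a * c, ?_⟩
    rw [Multiset.map_cons, Multiset.prod_cons, hc, Multiset.map_cons, Multiset.prod_cons]
    have : (X - C a : ℂ[X]) = C (-a) * (1 - C a⁻¹ * X) := by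
      have : C a * C a⁻¹ = (1:ℂ[X]) := by rw [← C_mul, mul_inv_cancel₀ ha, C_1]
      rw [C_neg]
      linear_combination (-X) * this
    rw [this, C_mul]; ring

lemma natDegree_A (s : Multiset ℂ) (hs : ∀ a ∈ s, a ≠ 0) :
    ((s.map (fun a => (1 - C a⁻¹ * X : ℂ[X]))).prod).natDegree = s.card := by
  obtain ⟨c, hc⟩ := factor_A s hs
  have h := Polynomial.natDegree_multiset_prod_X_sub_C_eq_card s
  have hc0 : c ≠ 0 := by
    rintro rfl
    have := (Polynomial.monic_multisetProd_X_sub_C s).ne_zero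
    simp at hc
    exact this (by simpa using hc)
  rw [hc, Polynomial.natDegree_C_mul hc0] at h
  exact h

lemma det_bound (p : ℂ[X]) (hp : p ≠ 0) (R : ℝ) (hR : 1 ≤ R) (j t : ℕ)
    (h : t + p.natDegree ≤ j + (p.roots.filter (fun z => R < ‖z‖)).card) :
    ‖p.coeff j‖ ≤ (p.natDegree.choose j) * (R⁻¹ ^ t * p.mahlerMeasure) := by
  set s := p.roots.filter (fun z => R < ‖z‖) with hsdef
  have hs : ∀ a ∈ s, R < ‖a‖ := fun a ha => (Multiset.mem_filter.1 ha).2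
  have hs0 : ∀ a ∈ s, a ≠ 0 := by
    intro a ha h0
    have := hs a ha
    simp [h0] at this
    linarith
  have hdvd : (s.map (fun a => (X - C a : ℂ[X]))).prod ∣ p :=
    (Multiset.prod_dvd_prod_of_le (Multiset.map_le_map (Multiset.filter_le _ _))).trans
      (Polynomial.prod_multiset_X_sub_C_dvd p)
  obtain ⟨c, hc⟩ := factor_A s hs0
  obtain ⟨B, hB⟩ := hdvd
  set A := (s.map (fun a => (1 - C a⁻¹ * X : ℂ[X]))).prod with hA
  have hpAB : p = A * (C c * B) := by rw [hB, hc]; ring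
  generalize C c * B = D at hpAB
  have hD0 : D ≠ 0 := by rintro rfl; simp at hpAB; exact hp hpAB
  have hA0 : A ≠ 0 := by intro h0; rw [h0] at hpAB; simp at hpAB; exact hp hpAB
  have hdeg : p.natDegree = s.card + D.natDegree := by
    rw [hpAB, Polynomial.natDegree_mul hA0 hD0, natDegree_A s hs0]
  have hM : p.mahlerMeasure = D.mahlerMeasure := by
    rw [hpAB, Polynomial.mahlerMeasure_mul, mahler_A s (fun a ha => hR.trans_lt (hs a ha)), one_mul]
  rw [hdeg, Nat.add_choose_eq, hM]
  conv_lhs => rw [hpAB, Polynomial.coeff_mul]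
  push_cast
  rw [Finset.sum_mul]
  refine norm_sum_le_of_le _ ?_
  rintro ⟨i, l⟩ hil
  rw [Finset.HasAntidiagonal.mem_antidiagonal] at hil
  simp only at hil ⊢
  have hMn := D.mahlerMeasure_nonneg
  have hR0 : 0 < R := by linarith
  by_cases hl : D.natDegree < l
  · rw [Polynomial.coeff_eq_zero_of_natDegree_lt hl]
    simp only [mul_zero, norm_zero]
    positivity
  · have hti : t ≤ i := by omega
    have h1 := coeff_A R hR s hs i
    have h2 := Polynomial.norm_coeff_le_choose_mul_mahlerMeasure l D
    have h3 : R⁻¹ ^ i ≤ R⁻¹ ^ t :=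
      pow_le_pow_of_le_one (by positivity) (inv_le_one_of_one_le₀ hR) hti
    rw [norm_mul]
    calc _ ≤ ((s.card.choose i) * R⁻¹ ^ t) * ((D.natDegree.choose l) * D.mahlerMeasure) := by
          apply mul_le_mul (h1.trans _) h2 (norm_nonneg _) (by positivity)
          gcongr
      _ = _ := by ring

lemma sum_dirac_apply (s : Multiset ℂ) (S : Set ℂ) (hS : MeasurableSet S)
    (Q : ℂ → Prop) [DecidablePred Q] (hQ : ∀ z, z ∈ S ↔ Q z) :
    (s.map MeasureTheory.Measure.dirac).sum S = ((s.filter Q).card : ℝ≥0∞) := by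
  induction s using Multiset.induction_on with
  | empty => simp
  | cons a s ih =>
    rw [Multiset.map_cons, Multiset.sum_cons, Measure.add_apply, ih, Measure.dirac_apply' _ hS]
    by_cases ha : Q a
    · simp [ha, (hQ a).2 ha, add_comm]
    · simp [ha, mt (hQ a).1 ha]

lemma randPoly_coeff {Ω : Type*} (ξ : ℕ → Ω → ℝ) (n : ℕ) (ω : Ω) (i : ℕ) :
    (randPoly ξ n ω).coeff i = if i ≤ n then ((ξ i ω : ℝ) : ℂ) else 0 := by
  unfold randPoly
  rw [Polynomial.finsetSum_coeff]
  simp only [Polynomial.coeff_C_mul, Polynomial.coeff_X_pow, mul_ite, mul_one, mul_zero]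
  rw [Finset.sum_ite_eq]
  simp

lemma randPoly_natDegree {Ω : Type*} (ξ : ℕ → Ω → ℝ) (n : ℕ) (ω : Ω) (h : 0 < ξ n ω) :
    (randPoly ξ n ω).natDegree = n := by
  apply Polynomial.natDegree_eq_of_le_of_coeff_ne_zero
  · rw [Polynomial.natDegree_le_iff_coeff_eq_zero]
    intro N hN
    rw [randPoly_coeff, if_neg (by omega)]
  · rw [randPoly_coeff, if_pos le_rfl]
    exact_mod_cast h.ne'

lemma randPoly_mahler {Ω : Type*} (ξ : ℕ → Ω → ℝ) (n : ℕ) (ω : Ω) (h : ∀ j, 0 < ξ j ω)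
    (a : ℝ) (ha : ∀ j ≤ n, ξ j ω ≤ a) :
    (randPoly ξ n ω).mahlerMeasure ≤ (n + 1) * a := by
  refine (Polynomial.mahlerMeasure_le_sum_norm_coeff _).trans ?_
  rw [Polynomial.sum_over_range _ (by simp), randPoly_natDegree ξ n ω (h n)]
  refine (Finset.sum_le_card_nsmul _ _ a ?_).trans ?_
  · intro j hj
    have hj' : j ≤ n := by simpa [Nat.lt_succ_iff] using hj
    rw [randPoly_coeff, if_pos hj']
    simpa [abs_of_pos (h j)] using ha j hj'
  · simp

lemma key_det {Ω : Type*} (ξ : ℕ → Ω → ℝ) (n m : ℕ) (hn : 1 ≤ n) (hm : 1 ≤ m) (ω : Ω)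
    (h : ∀ j, 0 < ξ j ω) (b δ : ℝ) (hb : 1 ≤ b) (hδ : 0 ≤ δ)
    (ha : ∀ j ≤ n, ξ j ω ≤ b * n ^ 2)
    (j : ℕ) (hj : j ≤ n) (hj2 : n ≤ j + n / (2 * m)) (hξ : Real.exp (-δ * n) < ξ j ω) :
    zeroMeasure (randPoly ξ n ω) (Metric.closedBall 0 ((16 * b * Real.exp δ) ^ (2 * m)))ᶜ
      ≤ (m : ℝ≥0∞)⁻¹ := by
  set S := 16 * b * Real.exp δ with hS
  set R := S ^ (2 * m) with hR
  set p := randPoly ξ n ω with hp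
  have hdeg : p.natDegree = n := randPoly_natDegree ξ n ω (h n)
  have hS1 : 1 ≤ S := by
    have := Real.one_le_exp hδ
    nlinarith
  have hR1 : 1 ≤ R := one_le_pow₀ hS1
  have hp0 : p ≠ 0 := by
    intro h0; rw [h0] at hdeg; simp at hdeg; omega
  unfold zeroMeasure
  rw [Measure.smul_apply, sum_dirac_apply _ _ Metric.isClosed_closedBall.measurableSet.compl
    (fun z => R < ‖z‖) (by intro z; simp), hdeg]
  set k := (p.roots.filter (fun z => R < ‖z‖)).card with hk
  have hkm : k * m ≤ n := by
    by_contra hcon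
    push Not at hcon
    set q := n / (2 * m) with hq
    have hq1 : 2 * m * q ≤ n := Nat.mul_div_le n (2 * m)
    have hq2 : n < 2 * m * (q + 1) := by
      exact Nat.lt_mul_div_succ n (by omega)
    have hkq : 2 * q < k := by
      by_contra hc
      push Not at hc
      have : k * m ≤ 2 * q * m := Nat.mul_le_mul_right _ hc
      have : 2 * q * m = 2 * m * q := by ring
      omega
    have hd := det_bound p hp0 R hR1 j (q + 1) (by rw [hdeg]; omega)
    have hM : p.mahlerMeasure ≤ (n + 1) * (b * n ^ 2) := randPoly_mahler ξ n ω h _ ha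
    rw [hdeg, hp, randPoly_coeff, if_pos hj] at hd
    rw [← hp] at hd
    have hcoef : ‖((ξ j ω : ℝ) : ℂ)‖ = ξ j ω := by simp [abs_of_pos (h j)]
    rw [hcoef] at hd
    have hS0 : 0 < S := by linarith
    have hRS : R⁻¹ ^ (q + 1) ≤ S⁻¹ ^ n := by
      rw [hR, ← inv_pow, ← pow_mul]
      exact pow_le_pow_of_le_one (by positivity) (inv_le_one_of_one_le₀ hS1) hq2.le
    have hch : ((n.choose j : ℕ) : ℝ) ≤ 2 ^ n := by exact_mod_cast Nat.choose_le_two_pow n j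
    have hn1 : ((n : ℝ) + 1) ≤ 2 ^ n := by exact_mod_cast Nat.lt_two_pow_self
    have hn2 : ((n : ℝ)) ≤ 2 ^ n := by linarith
    have hbn : b ≤ b ^ n := le_self_pow₀ hb (by omega)
    have hfin : ξ j ω ≤ 2 ^ n * (S⁻¹ ^ n * (2 ^ n * (b ^ n * (2 ^ n) ^ 2))) := by
      refine hd.trans ?_
      have := p.mahlerMeasure_nonneg
      gcongr
      refine hM.trans ?_
      gcongr
    have heq : (2:ℝ) ^ n * (S⁻¹ ^ n * (2 ^ n * (b ^ n * (2 ^ n) ^ 2))) = Real.exp (-δ * n) := by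
      rw [mul_comm (-δ), Real.exp_nat_mul, ← pow_mul, mul_comm n 2, pow_mul, ← mul_pow, ← mul_pow,
        ← mul_pow, ← mul_pow]
      congr 1
      rw [hS, Real.exp_neg]
      have := Real.exp_pos δ
      field_simp
      norm_num
    linarith
  rw [smul_eq_mul, ENNReal.inv_mul_le_iff (by simp; omega) (by simp), ← div_eq_mul_inv,
    ENNReal.le_div_iff_mul_le (by left; simp; omega) (by left; simp)]
  exact_mod_cast hkm

lemma exp_le_small (x : ℝ) (hx : 0 ≤ x) :
    ProbabilityTheory.expMeasure 1 (Set.Iic x) ≤ ENNReal.ofReal x := by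
  have := ProbabilityTheory.isProbabilityMeasure_expMeasure (r := 1) one_pos
  rw [← ProbabilityTheory.ofReal_cdf, ProbabilityTheory.cdf_expMeasure_eq one_pos, if_pos hx]
  apply ENNReal.ofReal_le_ofReal
  have := Real.add_one_le_exp (-(1 * x))
  linarith

lemma exp_tail (x : ℝ) (hx : 0 ≤ x) :
    ProbabilityTheory.expMeasure 1 (Set.Ioi x) = ENNReal.ofReal (Real.exp (-x)) := by
  have := ProbabilityTheory.isProbabilityMeasure_expMeasure (r := 1) one_pos
  rw [← Set.compl_Iic, prob_compl_eq_one_sub measurableSet_Iic,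
    ← ProbabilityTheory.ofReal_cdf, ProbabilityTheory.cdf_expMeasure_eq one_pos, if_pos hx,
    ← ENNReal.ofReal_one, ← ENNReal.ofReal_sub]
  · congr 1; simp
  · have := Real.exp_le_one_iff.2 (show -(1 * x) ≤ 0 by linarith)
    linarith

lemma prob_bound {Ω : Type*} [MeasurableSpace Ω] (P : Measure Ω) [IsProbabilityMeasure P]
    (ξ : ℕ → Ω → ℝ) (hmeas : ∀ j, Measurable (ξ j))
    (hindep : iIndepFun ξ P)
    (hdist : ∀ j, Measure.map (ξ j) P = ProbabilityTheory.expMeasure 1)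
    (n m : ℕ) (hm : 1 ≤ m) (b : ℝ) (hb : 1 ≤ b) :
    P {ω | (∃ j ≤ n, b * n ^ 2 < ξ j ω) ∨
      ∀ j ∈ Finset.Icc (n - n / (2 * m)) n, ξ j ω ≤ Real.exp (-(2 * m * b) * n)}
      ≤ ENNReal.ofReal ((n + 2) * Real.exp (-b * n ^ 2)) := by
  set q := n / (2 * m) with hq
  have hq2 : n < 2 * m * (q + 1) := by
    exact Nat.lt_mul_div_succ n (by omega)
  have hqn : q ≤ n := Nat.div_le_self _ _
  have h1 : P {ω | ∃ j ≤ n, b * n ^ 2 < ξ j ω}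
      ≤ ENNReal.ofReal ((n + 1) * Real.exp (-b * n ^ 2)) := by
    have hsub : {ω | ∃ j ≤ n, b * n ^ 2 < ξ j ω} ⊆
        ⋃ j ∈ Finset.range (n + 1), ξ j ⁻¹' (Set.Ioi (b * n ^ 2)) := by
      rintro ω ⟨j, hj, hjω⟩
      simp only [Set.mem_iUnion]
      exact ⟨j, Finset.mem_range.2 (by omega), hjω⟩
    refine (measure_mono hsub).trans ((measure_biUnion_finset_le _ _).trans ?_)
    have : ∀ j ∈ Finset.range (n + 1), P (ξ j ⁻¹' (Set.Ioi (b * n ^ 2)))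
        = ENNReal.ofReal (Real.exp (-b * n ^ 2)) := by
      intro j _
      rw [← Measure.map_apply (hmeas j) measurableSet_Ioi, hdist, exp_tail _ (by positivity)]
      congr 2; ring
    rw [Finset.sum_congr rfl this, Finset.sum_const, Finset.card_range, nsmul_eq_mul,
      ENNReal.ofReal_mul (by positivity)]
    gcongr
    rw [show (n : ℝ) + 1 = ((n + 1 : ℕ) : ℝ) by push_cast; rfl, ENNReal.ofReal_natCast]
  have h2 : P {ω | ∀ j ∈ Finset.Icc (n - q) n, ξ j ω ≤ Real.exp (-(2 * m * b) * n)}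
      ≤ ENNReal.ofReal (Real.exp (-b * n ^ 2)) := by
    have hset : {ω | ∀ j ∈ Finset.Icc (n - q) n, ξ j ω ≤ Real.exp (-(2 * m * b) * n)} =
        ⋂ j ∈ Finset.Icc (n - q) n, ξ j ⁻¹' (Set.Iic (Real.exp (-(2 * m * b) * n))) := by
      ext ω; simp
    rw [hset, hindep.measure_inter_preimage_eq_mul _ (fun _ _ => measurableSet_Iic)]
    have : ∀ j ∈ Finset.Icc (n - q) n, P (ξ j ⁻¹' (Set.Iic (Real.exp (-(2 * m * b) * n))))
        ≤ ENNReal.ofReal (Real.exp (-(2 * m * b) * n)) := by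
      intro j _
      rw [← Measure.map_apply (hmeas j) measurableSet_Iic, hdist]
      exact exp_le_small _ (Real.exp_pos _).le
    refine (Finset.prod_le_prod' this).trans ?_
    rw [Finset.prod_const, ← ENNReal.ofReal_pow (Real.exp_pos _).le, ← Real.exp_nat_mul]
    apply ENNReal.ofReal_le_ofReal
    apply Real.exp_le_exp.2
    have hcard : (Finset.Icc (n - q) n).card = q + 1 := by rw [Nat.card_Icc]; clear_value q; clear hq2; omega
    rw [hcard]
    have hq2' : (n : ℝ) ≤ 2 * m * (q + 1) := by exact_mod_cast hq2.le
    have h3 : (n : ℝ) * (b * n) ≤ 2 * m * (q + 1) * (b * n) := by gcongr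
    push_cast
    linarith
  rw [Set.ofPred_or]
  refine (measure_union_le _ _).trans ((add_le_add h1 h2).trans ?_)
  rw [← ENNReal.ofReal_add (by positivity) (by positivity)]
  apply ENNReal.ofReal_le_ofReal
  apply le_of_eq; ring

/-- Exponential tightness of the laws of the empirical measures `L_n`: for every
`T > 0` there is a compact set `K_T ⊆ M₁(ℂ)` with
`limsup (1/n²) log P(L_n ∉ K_T) ≤ -T`. -/
theorem exponential_tightness
    {Ω : Type*} [MeasurableSpace Ω] (P : Measure Ω) [IsProbabilityMeasure P]
    (ξ : ℕ → Ω → ℝ) (hmeas : ∀ j, Measurable (ξ j))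
    (hindep : iIndepFun ξ P)
    (hdist : ∀ j, Measure.map (ξ j) P = ProbabilityTheory.expMeasure 1)
    (Ln : ℕ → Ω → ProbabilityMeasure ℂ)
    (hLn : ∀ n, 1 ≤ n → ∀ ω, (∀ j, 0 < ξ j ω) →
      (Ln n ω : Measure ℂ) = zeroMeasure (randPoly ξ n ω)) :
    ∀ T : ℝ, 0 < T → ∃ K : Set (ProbabilityMeasure ℂ), IsCompact K ∧
      atTop.limsup (fun n : ℕ =>
          ((((n : ℝ) ^ 2)⁻¹ : ℝ) : EReal) * ENNReal.log (P {ω | Ln n ω ∉ K})) ≤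
        (-T : EReal) := by
  intro T hT
  set b : ℕ → ℝ := fun m => T + m + 3 with hb
  have hb1 : ∀ m, 1 ≤ b m := fun m => by
    have : (0:ℝ) ≤ m := Nat.cast_nonneg m
    simp only [hb]; linarith
  set δ : ℕ → ℝ := fun m => 2 * ((m + 1 : ℕ) : ℝ) * b m with hδ
  have hδ0 : ∀ m, 0 ≤ δ m := fun m => by
    have := hb1 m
    simp only [hδ]; positivity
  set Kc : ℕ → Set ℂ := fun m =>
    Metric.closedBall 0 ((16 * b m * Real.exp (δ m)) ^ (2 * (m + 1))) with hKc
  set u : ℕ → ℝ≥0 := fun m => ((m : ℝ≥0) + 1)⁻¹ with hu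
  have hu0 : Tendsto u atTop (nhds 0) := by
    have := tendsto_one_div_add_atTop_nhds_zero_nat (𝕜 := ℝ≥0)
    simpa [hu, one_div] using this
  refine ⟨{μ : ProbabilityMeasure ℂ | ∀ m, μ (Kc m)ᶜ ≤ u m},
    isCompact_setOfPred_probabilityMeasure_mass_eq_compl_isCompact_le hu0
      (fun m => isCompact_closedBall _ _) (Or.inl inferInstance), ?_⟩
  apply limsup_le_of_le (by isBoundedDefault)
  filter_upwards [eventually_ge_atTop 1] with n hn
  have hn' : (1 : ℝ) ≤ n := by exact_mod_cast hn
  have hnull : P {ω | ∃ j, ξ j ω ≤ 0} = 0 := by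
    rw [Set.ofPred_exists]
    refine measure_iUnion_null fun j => ?_
    have h0 : P (ξ j ⁻¹' Set.Iic 0) ≤ ENNReal.ofReal 0 := by
      rw [← Measure.map_apply (hmeas j) measurableSet_Iic, hdist]
      exact exp_le_small 0 le_rfl
    rw [ENNReal.ofReal_zero] at h0
    exact le_antisymm h0 (zero_le)
  set E : ℕ → Set Ω := fun m => {ω | (∃ j ≤ n, b m * n ^ 2 < ξ j ω) ∨
      ∀ j ∈ Finset.Icc (n - n / (2 * (m + 1))) n,
        ξ j ω ≤ Real.exp (-(2 * ((m + 1 : ℕ) : ℝ) * b m) * n)} with hE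
  have hsub : {ω | Ln n ω ∉ {μ : ProbabilityMeasure ℂ | ∀ m, μ (Kc m)ᶜ ≤ u m}} ⊆
      {ω | ∃ j, ξ j ω ≤ 0} ∪ ⋃ m, E m := by
    intro ω hω
    by_contra hcon
    simp only [Set.mem_union, Set.mem_iUnion, not_or, not_exists] at hcon
    obtain ⟨hpos, hnE⟩ := hcon
    have hpos' : ∀ j, 0 < ξ j ω := by
      intro j
      by_contra hj
      exact hpos ⟨j, not_lt.1 hj⟩
    apply hω
    intro m
    have hm := hnE m
    simp only [hE, Set.mem_ofPred_eq, not_or, not_exists, not_forall, not_and, not_lt, not_le] at hm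
    obtain ⟨ha, j, hj, hξ⟩ := hm
    rw [Finset.mem_Icc] at hj
    have hk := key_det ξ n (m + 1) hn (by omega) ω hpos' (b m) (δ m) (hb1 m) (hδ0 m) ha j hj.2
      (by omega) hξ
    rw [← hLn n hn ω hpos'] at hk
    rw [← ENNReal.coe_le_coe, ProbabilityMeasure.ennreal_coeFn_eq_coeFn_toMeasure]
    refine hk.trans (le_of_eq ?_)
    simp only [hu]
    rw [ENNReal.coe_inv (by positivity)]
    push_cast
    rfl
  have hprob : P {ω | Ln n ω ∉ {μ : ProbabilityMeasure ℂ | ∀ m, μ (Kc m)ᶜ ≤ u m}} ≤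
      ENNReal.ofReal (Real.exp (-T * n ^ 2)) := by
    refine (measure_mono hsub).trans ((measure_union_le _ _).trans ?_)
    rw [hnull, zero_add]
    refine (measure_iUnion_le _).trans ?_
    have hterm : ∀ m, P (E m) ≤ ENNReal.ofReal (Real.exp (-T * n ^ 2)) * (2⁻¹ : ℝ≥0∞) ^ (m + 1) := by
      intro m
      refine (prob_bound P ξ hmeas hindep hdist n (m + 1) (by omega) (b m) (hb1 m)).trans ?_
      have h2 : (2⁻¹ : ℝ≥0∞) ^ (m + 1) = ENNReal.ofReal ((2⁻¹ : ℝ) ^ (m + 1)) := by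
        rw [ENNReal.ofReal_pow (by norm_num), ENNReal.ofReal_inv_of_pos (by norm_num)]
        simp
      rw [h2, ← ENNReal.ofReal_mul (Real.exp_pos _).le]
      apply ENNReal.ofReal_le_ofReal
      have e1 : (n : ℝ) + 2 ≤ Real.exp (2 * n ^ 2) := by
        have := Real.add_one_le_exp ((n : ℝ) + 1)
        have h3 : Real.exp ((n : ℝ) + 1) ≤ Real.exp (2 * n ^ 2) :=
          Real.exp_le_exp.2 (by nlinarith)
        linarith
      have e2 : Real.exp (-((m : ℝ) + 1) * n ^ 2) ≤ (2⁻¹ : ℝ) ^ (m + 1) := by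
        have h4 : Real.exp (-1) ≤ (2⁻¹ : ℝ) := by
          rw [Real.exp_neg]
          apply inv_anti₀ (by norm_num)
          have := Real.add_one_le_exp (1 : ℝ)
          linarith
        calc Real.exp (-((m : ℝ) + 1) * n ^ 2) ≤ Real.exp (((m + 1 : ℕ) : ℝ) * (-1)) := by
              apply Real.exp_le_exp.2
              have : (0:ℝ) ≤ m := Nat.cast_nonneg m
              have h5 : (1 : ℝ) ≤ n ^ 2 := by nlinarith
              push_cast
              nlinarith
          _ = Real.exp (-1) ^ (m + 1) := Real.exp_nat_mul _ _
          _ ≤ _ := pow_le_pow_left₀ (Real.exp_pos _).le h4 _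
      have e3 : Real.exp (-b m * n ^ 2) = Real.exp (-(2 * n ^ 2)) * (Real.exp (-T * n ^ 2) *
          Real.exp (-((m : ℝ) + 1) * n ^ 2)) := by
        rw [← Real.exp_add, ← Real.exp_add]
        congr 1
        simp only [hb]; ring
      rw [e3, ← mul_assoc]
      have e4 : ((n : ℝ) + 2) * Real.exp (-(2 * n ^ 2)) ≤ 1 := by
        rw [Real.exp_neg, ← div_eq_mul_inv]
        exact (div_le_one (Real.exp_pos _)).2 e1
      calc _ ≤ 1 * (Real.exp (-T * n ^ 2) * Real.exp (-((m : ℝ) + 1) * n ^ 2)) := by gcongr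
        _ ≤ _ := by rw [one_mul]; gcongr
    refine (ENNReal.tsum_le_tsum hterm).trans ?_
    rw [ENNReal.tsum_mul_left, ENNReal.tsum_geometric_add_one]
    simp [ENNReal.inv_mul_cancel]
  have hn2 : (0 : ℝ) < (n : ℝ) ^ 2 := by positivity
  calc _ ≤ ((((n : ℝ) ^ 2)⁻¹ : ℝ) : EReal) *
        ENNReal.log (ENNReal.ofReal (Real.exp (-T * n ^ 2))) := by
        apply mul_le_mul_of_nonneg_left (ENNReal.log_monotone hprob)
        exact_mod_cast (inv_pos.2 hn2).le
    _ = (-T : EReal) := by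
        rw [ENNReal.log_ofReal_of_pos (Real.exp_pos _), Real.log_exp, ← EReal.coe_mul,
          ← EReal.coe_neg]
        congr 1
        field_simp
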